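/- arXiv:1706.03707 — 6 statements merged into one kernel-verified Lean document; each statement's English description precedes it below -/
import Mathlib

section
/- Let X be a nonempty convex subset of ℝⁿ and let F : X → ℝⁿ be continuous and strictly pseudomonotone on X. Then a point x* ∈ X is a solution of the variational inequality VI(F, X) if and only if it is a solution of the dual variational inequality VID(F, X). -/
open scoped RealInnerProductSpace

/-- For a continuous, strictly pseudomonotone `F` on a nonempty convex set `X`,
`x*` solves VI(F, X) iff it solves the dual variational inequality VID(F, X). -/
theorem primal_iff_dual_of_strictly_pseudomonotone {n : ℕ}
    (X : Set (EuclideanSpace ℝ (Fin n))) (hne : X.Nonempty) (hconv : Convex ℝ X)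
    (F : EuclideanSpace ℝ (Fin n) → EuclideanSpace ℝ (Fin n))
    (hF : ContinuousOn F X)
    (hstrict : ∀ x ∈ X, ∀ y ∈ X, x ≠ y → ⟪F x, y - x⟫ ≥ 0 → ⟪F y, y - x⟫ > 0)
    (xstar : EuclideanSpace ℝ (Fin n)) (hxstar : xstar ∈ X) :
    (∀ x ∈ X, ⟪F xstar, x - xstar⟫ ≥ 0) ↔ (∀ x ∈ X, ⟪F x, x - xstar⟫ ≥ 0) := by
  constructor
  · intro h x hx
    by_cases hxe : xstar = x
    · subst hxe; simp
    · exact (hstrict xstar hxstar x hx hxe (h x hx)).le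
  · intro h x hx
    have hmem : ∀ t ∈ Set.Ioc (0 : ℝ) 1, xstar + t • (x - xstar) ∈ X := fun t ht =>
      hconv.add_smul_sub_mem hxstar hx ⟨ht.1.le, ht.2⟩
    have hev : ∀ᶠ t in nhdsWithin (0 : ℝ) (Set.Ioi 0), t ∈ Set.Ioc (0 : ℝ) 1 :=
      Ioc_mem_nhdsGT one_pos
    have hc : Filter.Tendsto (fun t : ℝ => xstar + t • (x - xstar))
        (nhdsWithin 0 (Set.Ioi 0)) (nhds xstar) := by
      have : Continuous (fun t : ℝ => xstar + t • (x - xstar)) := by fun_prop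
      have h2 := this.tendsto 0
      simp only [zero_smul, add_zero] at h2
      exact h2.mono_left nhdsWithin_le_nhds
    have hc' : Filter.Tendsto (fun t : ℝ => xstar + t • (x - xstar))
        (nhdsWithin 0 (Set.Ioi 0)) (nhdsWithin xstar X) :=
      tendsto_nhdsWithin_iff.2 ⟨hc, hev.mono hmem⟩
    have hT : Filter.Tendsto (fun t : ℝ => ⟪F (xstar + t • (x - xstar)), x - xstar⟫)
        (nhdsWithin 0 (Set.Ioi 0)) (nhds ⟪F xstar, x - xstar⟫) :=
      ((hF xstar hxstar).tendsto.comp hc').inner tendsto_const_nhds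
    refine ge_of_tendsto hT (hev.mono fun t ht => ?_)
    have h3 := h _ (hmem t ht)
    rw [add_sub_cancel_left, real_inner_smul_right] at h3
    exact nonneg_of_mul_nonneg_right h3 ht.1
end

section
/- A set P ⊆ ℝⁿ is a polytope (the convex hull of a finite set of points) if and only if it is a bounded polyhedron (a bounded set of the form {x ∈ ℝⁿ : Ax ≤ b} for some m×n real matrix A and vector b ∈ ℝᵐ). -/
theorem bounded_poly_aux {E : Type*} [NormedAddCommGroup E] [NormedSpace ℝ E]
    [FiniteDimensional ℝ E] {ι : Type*} [Finite ι] (f : ι → E →ₗ[ℝ] ℝ) (b : ι → ℝ)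
    (hb : Bornology.IsBounded {x : E | ∀ i, f i x ≤ b i}) :
    ∃ S : Finset E, {x : E | ∀ i, f i x ≤ b i} = convexHull ℝ (S : Set E) := by
  classical
  set P := {x : E | ∀ i, f i x ≤ b i} with hP
  have hclosed : IsClosed P := by
    have : P = ⋂ i, {x | f i x ≤ b i} := by ext x; simp [hP]
    rw [this]
    exact isClosed_iInter fun i =>
      isClosed_le (f i).continuous_of_finiteDimensional continuous_const
  have hconv : Convex ℝ P := by
    have : P = ⋂ i, {x | f i x ≤ b i} := by ext x; simp [hP]
    rw [this]
    exact convex_iInter fun i => convex_halfSpace_le (f i).isLinear _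
  have hcomp : IsCompact P := by
    have : ProperSpace E := FiniteDimensional.proper ℝ E
    exact Metric.isCompact_of_isClosed_isBounded hclosed hb
  have hfin : (P.extremePoints ℝ).Finite := by
    refine Set.Finite.of_finite_image (f := fun x => {i | f i x = b i}) (Set.toFinite _) ?_
    intro x hx y hy hxy
    by_contra hne
    have hact : ∀ i, f i x = b i ↔ f i y = b i := fun i => by
      have := congrArg (fun s : Set ι => i ∈ s) hxy
      simpa using this
    have hxP : ∀ i, f i x ≤ b i := hx.1
    have hyP : ∀ i, f i y ≤ b i := hy.1
    -- a common step size
    have hev : ∀ᶠ e : ℝ in nhdsWithin 0 (Set.Ioi 0), ∀ i, f i (x - e • (y - x)) ≤ b i := by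
      rw [Filter.eventually_all]
      intro i
      by_cases h : f i x = b i
      · refine Filter.Eventually.of_forall fun e => ?_
        simp [h, (hact i).1 h]
      · have hlt : f i x < b i := lt_of_le_of_ne (hxP i) h
        have hc : Continuous fun e : ℝ => f i (x - e • (y - x)) := by
          simp only [map_sub, map_smul, smul_eq_mul]
          fun_prop
        have h0 : f i (x - (0 : ℝ) • (y - x)) < b i := by simpa using hlt
        have := (hc.continuousAt (x := 0)).eventually (gt_mem_nhds h0)
        exact (this.filter_mono nhdsWithin_le_nhds).mono fun e he => he.le
    obtain ⟨e, he, hepos⟩ := (hev.and self_mem_nhdsWithin).exists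
    have hepos : (0 : ℝ) < e := hepos
    have hz : x - e • (y - x) ∈ P := he
    have hseg : x ∈ openSegment ℝ y (x - e • (y - x)) := by
      refine ⟨e / (1 + e), 1 / (1 + e), by positivity, by positivity, by field_simp; ring, ?_⟩
      have h1 : (1 + e) ≠ 0 := by positivity
      match_scalars <;> field_simp <;> ring
    exact hne (hx.2 hy.1 hz hseg).symm
  refine ⟨hfin.toFinset, ?_⟩
  rw [Set.Finite.coe_toFinset, ← (hfin.isClosed_convexHull ℝ).closure_eq,
    closure_convexHull_extremePoints hcomp hconv]

theorem polytope_poly_aux {n : ℕ} (S : Finset (Fin n → ℝ)) :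
    ∃ T : Finset ((Fin n → ℝ) × ℝ),
      convexHull ℝ (S : Set (Fin n → ℝ)) = {x | ∀ t ∈ T, t.1 ⬝ᵥ x ≤ t.2} := by
  classical
  let D : (Fin n → ℝ) → ((Fin n → ℝ) × ℝ) →ₗ[ℝ] ℝ := fun s =>
    { toFun := fun p => p.1 ⬝ᵥ s - p.2
      map_add' := by intro p q; simp [add_dotProduct]; ring
      map_smul' := by intro c p; simp [smul_dotProduct]; ring }
  have hD : ∀ s p, D s p = p.1 ⬝ᵥ s - p.2 := fun _ _ => rfl
  let C : Fin n → ((Fin n → ℝ) × ℝ) →ₗ[ℝ] ℝ := fun i => LinearMap.proj i ∘ₗ LinearMap.fst ℝ _ _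
  let L : ((Fin n → ℝ) × ℝ) →ₗ[ℝ] ℝ := LinearMap.snd ℝ _ _
  let f : (S ⊕ (Fin n ⊕ Fin n)) ⊕ (Unit ⊕ Unit) → ((Fin n → ℝ) × ℝ) →ₗ[ℝ] ℝ :=
    Sum.elim (Sum.elim (fun s => D s) (Sum.elim C (fun i => - C i)))
      (Sum.elim (fun _ => L) (fun _ => - L))
  let b : (S ⊕ (Fin n ⊕ Fin n)) ⊕ (Unit ⊕ Unit) → ℝ :=
    Sum.elim (Sum.elim (fun _ => 0) (fun _ => 1)) (fun _ => 1)
  have hmem : ∀ p : ((Fin n → ℝ) × ℝ), (∀ i, f i p ≤ b i) ↔ (∀ s ∈ S, p.1 ⬝ᵥ s ≤ p.2) ∧ ‖p‖ ≤ 1 := by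
    intro p
    rw [Prod.norm_def, max_le_iff, pi_norm_le_iff_of_nonneg zero_le_one]
    simp only [Real.norm_eq_abs, abs_le, forall_and]
    simp [f, b, hD, C, L, Sum.forall, neg_le (b := (1 : ℝ))]
    tauto
  have hbd : Bornology.IsBounded {p : ((Fin n → ℝ) × ℝ) | ∀ i, f i p ≤ b i} := by
    refine (Metric.isBounded_closedBall (x := (0 : ((Fin n → ℝ) × ℝ))) (r := 1)).subset fun p hp => ?_
    simpa using ((hmem p).1 hp).2
  obtain ⟨T, hT⟩ := bounded_poly_aux f b hbd
  refine ⟨T, Set.Subset.antisymm ?_ ?_⟩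
  · refine convexHull_min ?_ ?_
    · intro s hs t ht
      have : t ∈ {p : ((Fin n → ℝ) × ℝ) | ∀ i, f i p ≤ b i} := by
        rw [hT]; exact subset_convexHull ℝ _ ht
      exact ((hmem t).1 this).1 s hs
    · intro x hx y hy u v hu hv huv t ht
      have h1 := hx t ht
      have h2 := hy t ht
      simp only [dotProduct_add, dotProduct_smul, smul_eq_mul]
      calc _ ≤ u * t.2 + v * t.2 := by gcongr
        _ = t.2 := by rw [← add_mul, huv, one_mul]
  · intro x hx
    by_contra hxS
    obtain ⟨g, u, hgu, hux⟩ := geometric_hahn_banach_closed_point (convex_convexHull ℝ _)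
      (S.finite_toSet.isClosed_convexHull ℝ) hxS
    let a : Fin n → ℝ := fun i => g (Pi.single i 1)
    have ha : ∀ y, a ⬝ᵥ y = g y := by
      intro y
      conv_rhs => rw [pi_eq_sum_univ' y]
      simp [a, dotProduct, mul_comm]
    let p : ((Fin n → ℝ) × ℝ) := (a, u)
    let c : ℝ := (1 + ‖p‖)⁻¹
    have hc : 0 < c := by positivity
    have hq : c • p ∈ convexHull ℝ (T : Set ((Fin n → ℝ) × ℝ)) := by
      rw [← hT]
      refine (hmem _).2 ⟨?_, ?_⟩
      · intro s hs
        have := hgu s (subset_convexHull ℝ _ hs)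
        simp only [p, Prod.smul_fst, Prod.smul_snd, smul_dotProduct, ha, smul_eq_mul]
        gcongr
      · rw [norm_smul, Real.norm_of_nonneg hc.le]
        have : c * (1 + ‖p‖) = 1 := inv_mul_cancel₀ (by positivity)
        nlinarith
    have hsub : convexHull ℝ (T : Set ((Fin n → ℝ) × ℝ)) ⊆ {p | D x p ≤ 0} := by
      refine convexHull_min ?_ (convex_halfSpace_le (D x).isLinear _)
      intro t ht
      have := hx t ht
      simpa [hD] using this
    have h := hsub hq
    simp only [Set.mem_ofPred_eq, hD, Prod.smul_fst, Prod.smul_snd, smul_dotProduct, smul_eq_mul, p, ha] at h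
    nlinarith [mul_pos hc (sub_pos.2 hux)]

/-- Minkowski–Weyl: a set `P ⊆ ℝⁿ` is a polytope (convex hull of a finite set)
iff it is a bounded polyhedron (a bounded set `{x : A *ᵥ x ≤ b}`). -/
theorem polytope_iff_bounded_polyhedron {n : ℕ} (P : Set (Fin n → ℝ)) :
    (∃ S : Finset (Fin n → ℝ), P = convexHull ℝ (S : Set (Fin n → ℝ))) ↔
    (Bornology.IsBounded P ∧
      ∃ (m : ℕ) (A : Matrix (Fin m) (Fin n) ℝ) (b : Fin m → ℝ),
        P = {x : Fin n → ℝ | ∀ i, A.mulVec x i ≤ b i}) := by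
  constructor
  · rintro ⟨S, rfl⟩
    refine ⟨isBounded_convexHull.2 S.finite_toSet.isBounded, ?_⟩
    obtain ⟨T, hT⟩ := polytope_poly_aux S
    refine ⟨T.card, Matrix.of fun i => (T.equivFin.symm i).1.1,
      fun i => (T.equivFin.symm i).1.2, ?_⟩
    rw [hT]
    ext x
    constructor
    · intro h i
      exact h _ (T.equivFin.symm i).2
    · intro h t ht
      have := h (T.equivFin ⟨t, ht⟩)
      simpa [Matrix.mulVec] using this
  · rintro ⟨hb, m, A, b, rfl⟩
    exact bounded_poly_aux (fun i => LinearMap.proj i ∘ₗ A.mulVecLin) b hb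
end

section
/- Let X ⊆ ℝⁿ be a compact convex body (a compact convex set with nonempty interior) and let F : X → ℝⁿ be a continuous function. Then the variational inequality VI(F, X) has at least one solution, i.e. there exists x* ∈ X with F(x*)ᵀ(x − x*) ≥ 0 for all x ∈ X. -/
open scoped RealInnerProductSpace
abbrev EE (n : ℕ) := EuclideanSpace ℝ (Fin n)

lemma proj_exists {n : ℕ} (X : Set (EE n)) (hc : IsCompact X) (hv : Convex ℝ X) (hne : X.Nonempty) :
    ∃ P : EE n → EE n, (∀ u, P u ∈ X) ∧ ∀ u, ∀ w ∈ X, ⟪u - P u, w - P u⟫ ≤ 0 := by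
  have h : ∀ u : EE n, ∃ p ∈ X, ∀ w ∈ X, ⟪u - p, w - p⟫ ≤ 0 := by
    intro u
    obtain ⟨v, hvX, h⟩ := exists_norm_eq_iInf_of_complete_convex hne hc.isComplete hv u
    exact ⟨v, hvX, (norm_eq_iInf_iff_real_inner_le_zero hv hvX).1 h⟩
  choose P h1 h2 using h
  exact ⟨P, h1, h2⟩

lemma proj_lip {n : ℕ} (X : Set (EE n)) (P : EE n → EE n) (h1 : ∀ u, P u ∈ X)
    (h2 : ∀ u, ∀ w ∈ X, ⟪u - P u, w - P u⟫ ≤ 0) : LipschitzWith 1 P := by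
  refine LipschitzWith.of_dist_le_mul fun u v => ?_
  rw [dist_eq_norm, dist_eq_norm, NNReal.coe_one, one_mul]
  have a := h2 u (P v) (h1 v)
  have b := h2 v (P u) (h1 u)
  have c : ⟪P u - P v, P u - P v⟫ ≤ ⟪u - v, P u - P v⟫ := by
    have : ⟪u - v, P u - P v⟫ - ⟪P u - P v, P u - P v⟫
      = - ⟪u - P u, P v - P u⟫ - ⟪v - P v, P u - P v⟫ := by
      simp only [inner_sub_left, inner_sub_right]; ring
    linarith
  have d := real_inner_le_norm (u - v) (P u - P v)
  rw [real_inner_self_eq_norm_sq] at c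
  by_contra! hh
  nlinarith [norm_nonneg (u - v), norm_nonneg (P u - P v)]

lemma proj_fix {n : ℕ} (X : Set (EE n)) (P : EE n → EE n) 
    (h2 : ∀ u, ∀ w ∈ X, ⟪u - P u, w - P u⟫ ≤ 0) (u : EE n) (hu : u ∈ X) : P u = u := by
  have := h2 u u hu
  rw [real_inner_self_nonpos, sub_eq_zero] at this
  exact this.symm

lemma proj_ball {n : ℕ} (P : EE n → EE n) (h1 : ∀ u, P u ∈ Metric.closedBall (0 : EE n) 1)
    (h2 : ∀ u, ∀ w ∈ Metric.closedBall (0 : EE n) 1, ⟪u - P u, w - P u⟫ ≤ 0)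
    (x : EE n) (hx : 1 ≤ ‖x‖) : ‖P x‖ = 1 := by
  have hp := h1 x
  rw [mem_closedBall_zero_iff] at hp
  by_contra hne
  have hlt : ‖P x‖ < 1 := lt_of_le_of_ne hp hne
  have hx0 : (0:ℝ) < ‖x‖ := by linarith
  have h := h2 x (‖x‖⁻¹ • x) (by
    rw [mem_closedBall_zero_iff, norm_smul, norm_inv, norm_norm, inv_mul_cancel₀ hx0.ne'])
  have hc : ⟪P x, x⟫ ≤ ‖P x‖ * ‖x‖ := real_inner_le_norm _ _
  simp only [inner_sub_left, inner_sub_right, inner_smul_right, real_inner_self_eq_norm_sq] at h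
  rw [real_inner_comm] at h
  set q := ⟪P x, x⟫ with hq
  obtain ⟨c, hcq⟩ : ∃ c, q = c * ‖x‖ := ⟨q / ‖x‖, by field_simp⟩
  have e1 : ‖x‖⁻¹ * ‖x‖ ^ 2 = ‖x‖ := by field_simp
  have e2 : ‖x‖⁻¹ * q = c := by rw [hcq]; field_simp
  have hcp : c ≤ ‖P x‖ := by rw [hcq] at hc; exact le_of_mul_le_mul_right hc hx0
  have habs : |q| ≤ ‖P x‖ * ‖x‖ := abs_real_inner_le_norm _ _
  have hcp2 : c ^ 2 ≤ ‖P x‖ ^ 2 := by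
    apply sq_le_sq'
    · rw [hcq] at habs
      have := (abs_le.1 habs).1
      nlinarith
    · exact hcp
  rw [real_inner_comm, ← hq] at h
  rw [mul_sub, e1, e2, hcq] at h
  nlinarith [mul_pos (show 0 < ‖x‖ - c by linarith) (show 0 < 1 - c by linarith)]

lemma det_poly {n : ℕ} (A : EE n →L[ℝ] EE n) : ∃ p : Polynomial ℝ, p.natDegree ≤ n ∧
    ∀ t : ℝ, p.eval t = (ContinuousLinearMap.id ℝ (EE n) + t • A).det := by
  let b := (EuclideanSpace.basisFun (Fin n) ℝ).toBasis
  let M := LinearMap.toMatrix b b (A : EE n →ₗ[ℝ] EE n)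
  refine ⟨Matrix.det ((Polynomial.X : Polynomial ℝ) • M.map Polynomial.C + (1 : Matrix (Fin n) (Fin n) ℝ).map Polynomial.C), ?_, ?_⟩
  · simpa using Polynomial.natDegree_det_X_add_C_le M 1
  · intro t
    rw [ContinuousLinearMap.det, ← LinearMap.det_toMatrix b]
    rw [← Polynomial.coe_evalRingHom, RingHom.map_det]
    congr 1
    ext i j
    by_cases hij : i = j <;>
      simp [M, b, hij, LinearMap.toMatrix_apply, Matrix.one_apply] <;> ring

lemma small_t {n : ℕ} (r : EE n → EE n)
    (hd : ∀ x ∈ Metric.closedBall (0 : EE n) 1, ContDiffAt ℝ 1 r x)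
    (hid : ∀ x, ‖x‖ = 1 → r x = x) :
    ∃ δ > 0, ∀ t : ℝ, 0 < t → t < δ →
      MeasureTheory.IntegrableOn (fun x => (ContinuousLinearMap.id ℝ (EE n) +
        t • (fderiv ℝ r x - ContinuousLinearMap.id ℝ (EE n))).det) (Metric.ball 0 1) ∧
      ∫ x in Metric.ball (0 : EE n) 1, (ContinuousLinearMap.id ℝ (EE n) +
        t • (fderiv ℝ r x - ContinuousLinearMap.id ℝ (EE n))).det
        = (MeasureTheory.volume.real (Metric.ball (0 : EE n) 1)) := by
  let B := Metric.closedBall (0 : EE n) 1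
  have hBc : IsCompact B := isCompact_closedBall _ _
  obtain ⟨P, hP1, hP2⟩ := proj_exists B hBc (convex_closedBall _ _) ⟨0, by simp [B]⟩
  have hPl := proj_lip B P hP1 hP2
  let g : EE n → EE n := fun x => r x - x
  have hg : ∀ x ∈ B, ContDiffAt ℝ 1 g x := fun x hx => (hd x hx).sub contDiffAt_id
  obtain ⟨L, hL⟩ : ∃ L, LipschitzOnWith L g B := by
    apply LocallyLipschitzOn.exists_lipschitzOnWith_of_compact hBc
    intro x hx
    obtain ⟨K, t, ht, h⟩ := (hg x hx).exists_lipschitzOnWith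
    exact ⟨K, t, mem_nhdsWithin_of_mem_nhds ht, h⟩
  let G : EE n → EE n := fun x => g (P x)
  have hGL : LipschitzWith L G := by
    have := hL.comp (hPl.lipschitzOnWith (s := Set.univ)) (fun x _ => hP1 x)
    rw [mul_one, lipschitzOnWith_univ] at this
    exact this
  have hG0 : ∀ x, x ∉ Metric.ball (0 : EE n) 1 → G x = 0 := by
    intro x hx
    have : 1 ≤ ‖x‖ := by simpa using hx
    have := hid _ (proj_ball P hP1 hP2 x this)
    simp [G, g, this]
  have hGg : ∀ x ∈ B, G x = g x := fun x hx => by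
    simp only [G]; rw [proj_fix B P hP2 x hx]
  obtain ⟨ε, hε, hdet⟩ : ∃ ε > 0, ∀ M : EE n →L[ℝ] EE n,
      dist M (ContinuousLinearMap.id ℝ (EE n)) < ε → 0 < M.det := by
    have hc := (ContinuousLinearMap.continuous_det (𝕜 := ℝ) (E := EE n)).continuousAt
      (x := ContinuousLinearMap.id ℝ (EE n))
    have : ∀ᶠ M in nhds (ContinuousLinearMap.id ℝ (EE n)), 0 < M.det := by
      apply hc.eventually (lt_mem_nhds _)
      simp [ContinuousLinearMap.det]
    exact Metric.eventually_nhds_iff.1 this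
  have hL0 : (0:ℝ) ≤ L := L.2
  refine ⟨min 1 ε / (L + 1), by positivity, fun t ht0 ht => ?_⟩
  rw [lt_div_iff₀ (by positivity)] at ht
  have htL : t * L < 1 := by nlinarith [min_le_left 1 ε]
  have htε : t * L < ε := by nlinarith [min_le_right 1 ε]
  let f : EE n → EE n := fun x => x + t • G x
  have hcontr : ∀ x y, ‖t • G x - t • G y‖ ≤ (t * L) * ‖x - y‖ := by
    intro x y
    rw [← smul_sub, norm_smul, Real.norm_of_nonneg ht0.le, mul_assoc]
    exact mul_le_mul_of_nonneg_left (by simpa using hGL.norm_sub_le x y) ht0.le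
  have hinj : Function.Injective f := by
    intro x y hxy
    have h1 : x - y = -(t • G x - t • G y) := by
      simp only [f] at hxy
      rw [neg_sub, sub_eq_sub_iff_add_eq_add, hxy, add_comm]
    have h2 := hcontr x y
    rw [← norm_neg, ← h1] at h2
    have : ‖x - y‖ = 0 := by nlinarith [norm_nonneg (x - y)]
    exact sub_eq_zero.1 (norm_eq_zero.1 this)
  have hsurj : Function.Surjective f := by
    intro y
    have hC : ContractingWith ⟨t * L, by positivity⟩ (fun x => y - t • G x) := by
      refine ⟨by exact_mod_cast htL, LipschitzWith.of_dist_le_mul fun a b => ?_⟩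
      rw [dist_eq_norm, dist_eq_norm, sub_sub_sub_cancel_left, norm_sub_rev a b]
      exact hcontr b a
    have h := hC.fixedPoint_isFixedPt
    exact ⟨_, (sub_eq_iff_eq_add.1 h).symm⟩
  have himg : f '' (Metric.ball 0 1) = Metric.ball 0 1 := by
    have hout : ∀ x, x ∉ Metric.ball (0 : EE n) 1 → f x = x := fun x hx => by
      simp [f, hG0 x hx]
    ext y
    constructor
    · rintro ⟨x, hx, rfl⟩
      by_contra hn
      have := hinj (hout _ hn)
      rw [this] at hn
      exact hn hx
    · intro hy
      obtain ⟨x, rfl⟩ := hsurj y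
      refine ⟨x, ?_, rfl⟩
      by_contra hn
      rw [hout x hn] at hy
      exact hn hy
  let f' : EE n → (EE n →L[ℝ] EE n) := fun x => ContinuousLinearMap.id ℝ (EE n) +
        t • (fderiv ℝ r x - ContinuousLinearMap.id ℝ (EE n))
  have hGd : ∀ x ∈ Metric.ball (0 : EE n) 1,
      HasFDerivAt G (fderiv ℝ r x - ContinuousLinearMap.id ℝ (EE n)) x := by
    intro x hx
    have h1 : HasFDerivAt g (fderiv ℝ r x - ContinuousLinearMap.id ℝ (EE n)) x :=
      ((hd x (Metric.ball_subset_closedBall hx)).differentiableAt one_ne_zero).hasFDerivAt.sub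
        (hasFDerivAt_id x)
    refine h1.congr_of_eventuallyEq ?_
    filter_upwards [Metric.isOpen_ball.mem_nhds hx] with y hy
    exact hGg y (Metric.ball_subset_closedBall hy)
  have hf' : ∀ x ∈ Metric.ball (0 : EE n) 1, HasFDerivWithinAt f (f' x) (Metric.ball 0 1) x :=
    fun x hx => ((hasFDerivAt_id x).add ((hGd x hx).const_smul t)).hasFDerivWithinAt
  have hpos : ∀ x ∈ Metric.ball (0 : EE n) 1, |(f' x).det| = (f' x).det := by
    intro x hx
    apply abs_of_pos
    apply hdet
    rw [dist_eq_norm]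
    simp only [f', add_sub_cancel_left]
    rw [norm_smul, Real.norm_of_nonneg ht0.le]
    refine lt_of_le_of_lt (mul_le_mul_of_nonneg_left ?_ ht0.le) htε
    rw [← (hGd x hx).fderiv]
    exact norm_fderiv_le_of_lipschitz ℝ hGL
  have hm : MeasurableSet (Metric.ball (0 : EE n) 1) := measurableSet_ball
  have hI := MeasureTheory.integral_image_eq_integral_abs_det_fderiv_smul MeasureTheory.volume
    hm hf' hinj.injOn (fun _ => (1:ℝ))
  have hJ := MeasureTheory.integrableOn_image_iff_integrableOn_abs_det_fderiv_smul
    MeasureTheory.volume hm hf' hinj.injOn (fun _ => (1:ℝ))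
  rw [himg] at hI hJ
  have hcst : MeasureTheory.IntegrableOn (fun _ : EE n => (1:ℝ)) (Metric.ball 0 1) :=
    MeasureTheory.integrableOn_const (by finiteness)
  constructor
  · refine (hJ.1 hcst).congr_fun (fun x hx => ?_) hm
    simp only [smul_eq_mul, mul_one]
    exact hpos x hx
  · have h2 : ∫ x in Metric.ball (0 : EE n) 1, |(f' x).det| • (1:ℝ) =
        ∫ x in Metric.ball (0 : EE n) 1, (f' x).det := by
      refine MeasureTheory.setIntegral_congr_fun hm (fun x hx => ?_)
      simp only [smul_eq_mul, mul_one]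
      exact hpos x hx
    rw [← h2, ← hI]
    simp

lemma no_retract {n : ℕ} (r : EE n → EE n)
    (hd : ∀ x ∈ Metric.closedBall (0 : EE n) 1, ContDiffAt ℝ 1 r x)
    (hid : ∀ x, ‖x‖ = 1 → r x = x)
    (hS : ∀ x ∈ Metric.closedBall (0 : EE n) 1, ‖r x‖ = 1) : False := by
  obtain ⟨δ, hδ, h⟩ := small_t r hd hid
  let v : ℕ → ℝ := fun i => δ / (i + 2)
  have hv0 : ∀ i, 0 < v i := fun i => by positivity
  have hv1 : ∀ i, v i < δ := fun i => by
    have : (0:ℝ) ≤ i := Nat.cast_nonneg i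
    exact div_lt_self hδ (by linarith)
  have hvi : Function.Injective v := by
    intro i j hij
    simp only [v] at hij
    rw [div_eq_div_iff (by positivity) (by positivity)] at hij
    have := mul_left_cancel₀ hδ.ne' hij
    have h3 : (j:ℝ) = i := by linarith
    exact_mod_cast h3.symm
  let s := Finset.range (n + 1)
  let c : ℕ → ℝ := fun i => (Lagrange.basis s v i).eval 1
  have hc1 : ∑ i ∈ s, c i = 1 := by
    have := Lagrange.sum_basis (s := s) (v := v) hvi.injOn ⟨0, by simp [s]⟩
    have := congrArg (Polynomial.eval 1) this
    simpa [Polynomial.eval_finsetSum] using this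
  let D : ℝ → EE n → ℝ := fun t x => (ContinuousLinearMap.id ℝ (EE n) +
        t • (fderiv ℝ r x - ContinuousLinearMap.id ℝ (EE n))).det
  have hD : ∀ x, D 1 x = ∑ i ∈ s, c i * D (v i) x := by
    intro x
    obtain ⟨p, hp, hpe⟩ := det_poly (fderiv ℝ r x - ContinuousLinearMap.id ℝ (EE n))
    have h1 := Lagrange.eq_interpolate (s := s) (v := v) (f := p) hvi.injOn (by
      refine lt_of_le_of_lt (Polynomial.degree_le_natDegree) ?_
      simp only [s, Finset.card_range]
      exact_mod_cast Nat.lt_succ_of_le hp)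
    have h2 := congrArg (Polynomial.eval 1) h1
    rw [Lagrange.interpolate_apply, Polynomial.eval_finsetSum] at h2
    simp only [Polynomial.eval_mul, Polynomial.eval_C, hpe] at h2
    rw [show D 1 x = _ from h2]
    exact Finset.sum_congr rfl fun i _ => mul_comm _ _
  have hD0 : ∀ x ∈ Metric.ball (0 : EE n) 1, D 1 x = 0 := by
    intro x hx
    have hrd := ((hd x (Metric.ball_subset_closedBall hx)).differentiableAt one_ne_zero).hasFDerivAt
    have e : D 1 x = (fderiv ℝ r x).det := by simp [D]
    rw [e]
    by_contra hne
    have hu : IsUnit (LinearMap.det (fderiv ℝ r x : EE n →ₗ[ℝ] EE n)) := isUnit_iff_ne_zero.2 hne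
    have hsu : Function.Surjective (fderiv ℝ r x) :=
      (LinearMap.equivOfDetNeZero (fderiv ℝ r x : EE n →ₗ[ℝ] EE n) hne).surjective
    obtain ⟨w, hw⟩ := hsu (r x)
    have h1 := hrd.inner ℝ hrd
    have h2 : HasFDerivAt (fun y => ⟪r y, r y⟫) (0 : EE n →L[ℝ] ℝ) x := by
      refine (hasFDerivAt_const (1:ℝ) x).congr_of_eventuallyEq ?_
      filter_upwards [Metric.isOpen_ball.mem_nhds hx] with y hy
      rw [real_inner_self_eq_norm_sq, hS y (Metric.ball_subset_closedBall hy), one_pow]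
    have h3 := congrArg (fun A => A w) (h1.unique h2)
    simp [hw, hS x (Metric.ball_subset_closedBall hx)] at h3
  have hint : ∫ x in Metric.ball (0 : EE n) 1, D 1 x = 0 := by
    rw [MeasureTheory.setIntegral_congr_fun measurableSet_ball (g := fun _ => (0:ℝ)) hD0]
    simp
  have hint2 : ∫ x in Metric.ball (0 : EE n) 1, D 1 x =
      MeasureTheory.volume.real (Metric.ball (0 : EE n) 1) := by
    simp only [hD]
    rw [MeasureTheory.integral_finsetSum]
    · simp only [MeasureTheory.integral_const_mul]
      rw [Finset.sum_congr rfl fun i _ => by rw [show ∫ x in Metric.ball (0 : EE n) 1, D (v i) x = _ from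
        (h (v i) (hv0 i) (hv1 i)).2], ← Finset.sum_mul, hc1, one_mul]
    · intro i _
      exact (h (v i) (hv0 i) (hv1 i)).1.const_mul _
  have hvol : 0 < MeasureTheory.volume.real (Metric.ball (0 : EE n) 1) :=
    ENNReal.toReal_pos (Metric.measure_ball_pos _ _ one_pos).ne' (by finiteness)
  linarith

lemma brouwer_smooth {n : ℕ} (h : EE n → EE n) (hd : ContDiff ℝ 1 h) (hb : ∀ x, ‖h x‖ < 1) :
    ∃ x ∈ Metric.closedBall (0 : EE n) 1, h x = x := by
  by_contra! hne
  let u : EE n → EE n := fun x => x - h x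
  let d : EE n → ℝ := fun x => ⟪x, u x⟫ ^ 2 + ⟪u x, u x⟫ * (1 - ⟪x, x⟫)
  let s : EE n → ℝ := fun x => (- ⟪x, u x⟫ + √(d x)) / ⟪u x, u x⟫
  have hu : ContDiff ℝ 1 u := contDiff_id.sub hd
  have hu0 : ∀ x ∈ Metric.closedBall (0 : EE n) 1, 0 < ⟪u x, u x⟫ := fun x hx =>
    real_inner_self_pos.2 (sub_ne_zero.2 (hne x hx).symm)
  have hxu : ∀ x : EE n, ‖x‖ = 1 → 0 < ⟪x, u x⟫ := by
    intro x hx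
    simp only [u, inner_sub_right, real_inner_self_eq_norm_sq, hx]
    have := real_inner_le_norm x (h x)
    rw [hx] at this
    linarith [hb x]
  have hdpos : ∀ x ∈ Metric.closedBall (0 : EE n) 1, 0 < d x := by
    intro x hx
    have h0 := hu0 x hx
    rw [mem_closedBall_zero_iff] at hx
    rcases hx.lt_or_eq with hx | hx
    · have : 0 < 1 - ⟪x, x⟫ := by
        rw [real_inner_self_eq_norm_sq]; nlinarith [norm_nonneg x]
      positivity
    · have h1 := hxu x hx
      have : 1 - ⟪x, x⟫ = 0 := by rw [real_inner_self_eq_norm_sq, hx]; norm_num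
      simp only [d, this]
      positivity
  have hdd : ContDiff ℝ 1 d :=
    ((contDiff_id.inner ℝ hu).pow 2).add ((hu.inner ℝ hu).mul
      (contDiff_const.sub (contDiff_id.inner ℝ contDiff_id)))
  refine no_retract (fun x => x + s x • u x) (fun x hx => ?_) (fun x hx => ?_) (fun x hx => ?_)
  · have hs : ContDiffAt ℝ 1 s x := ?_
    · have := hs.smul hu.contDiffAt
      exact contDiffAt_id.add this
    refine ContDiffAt.div ?_ (hu.inner ℝ hu).contDiffAt (hu0 x hx).ne'
    exact (contDiff_id.inner ℝ hu).contDiffAt.neg.add (hdd.contDiffAt.sqrt (hdpos x hx).ne')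
  · have : s x = 0 := by
      have h1 : d x = ⟪x, u x⟫ ^ 2 := by
        simp only [d, real_inner_self_eq_norm_sq x, hx]; ring
      simp only [s, h1, Real.sqrt_sq (hxu x hx).le, neg_add_cancel, zero_div]
    simp [this]
  · have h1 : ⟪x + s x • u x, x + s x • u x⟫ = 1 := by
      have hsq := Real.sq_sqrt (hdpos x hx).le
      have hsu : s x * ⟪u x, u x⟫ = - ⟪x, u x⟫ + √(d x) := div_mul_cancel₀ _ (hu0 x hx).ne'
      have hexp : ⟪x + s x • u x, x + s x • u x⟫ =
          ⟪x, x⟫ + 2 * s x * ⟪x, u x⟫ + s x ^ 2 * ⟪u x, u x⟫ := by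
        simp only [inner_add_left, inner_add_right, real_inner_smul_left, real_inner_smul_right]
        rw [real_inner_comm x (u x)]; ring
      rw [hexp]
      apply mul_left_cancel₀ (hu0 x hx).ne'
      have hd' : d x = ⟪x, u x⟫ ^ 2 + ⟪u x, u x⟫ * (1 - ⟪x, x⟫) := rfl
      set a := ⟪u x, u x⟫
      set b := ⟪x, u x⟫
      have : √(d x) = s x * a + b := by linarith
      rw [this] at hsq
      rw [hd'] at hsq
      linarith [hsq]
    rw [real_inner_self_eq_norm_sq] at h1
    exact (pow_eq_one_iff_of_nonneg (norm_nonneg _) two_ne_zero).1 h1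

lemma brouwer {n : ℕ} (h : EE n → EE n) (hc : Continuous h) (hb : ∀ x, ‖h x‖ ≤ 1) :
    ∃ x, h x = x := by
  by_contra! hne
  have hB : IsCompact (Metric.closedBall (0 : EE n) 1) := isCompact_closedBall _ _
  obtain ⟨x0, hx0, hmin⟩ := hB.exists_isMinOn ⟨0, by simp⟩
    (f := fun x => ‖h x - x‖) (hc.sub continuous_id).norm.continuousOn
  have hm : 0 < ‖h x0 - x0‖ := norm_pos_iff.2 (sub_ne_zero.2 (hne x0))
  set m := ‖h x0 - x0‖ with hmdef
  let ε := m / 4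
  have hε : 0 < ε := by positivity
  obtain ⟨g, hg, hgh, -⟩ := hc.exists_contDiff_approx 1 (continuous_const (y := ε)) (fun _ => hε)
  have hgn : ∀ x, ‖g x‖ < 1 + ε := fun x => by
    have := hgh x
    rw [dist_eq_norm] at this
    have h2 := norm_le_norm_add_norm_sub' (g x) (h x)
    linarith [hb x]
  obtain ⟨x, hx, hfx⟩ := brouwer_smooth (fun x => (1 + ε)⁻¹ • g x) (hg.const_smul (1 + ε)⁻¹) (fun x => by
    rw [norm_smul, norm_inv, Real.norm_of_nonneg (by positivity), inv_mul_lt_iff₀ (by positivity), mul_one]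
    exact hgn x)
  have h1 : g x = (1 + ε) • x := by
    rw [← hfx, smul_smul, hfx, mul_inv_cancel₀ (by positivity), one_smul]
  have h2 : ‖g x - x‖ ≤ ε := by
    have : g x - x = ε • x := by rw [h1, add_smul, one_smul, add_sub_cancel_left]
    rw [this, norm_smul, Real.norm_of_nonneg hε.le]
    rw [mem_closedBall_zero_iff] at hx
    nlinarith
  have h3 : m ≤ ‖h x - x‖ := hmin hx
  have h4 := norm_sub_le_norm_sub_add_norm_sub (h x) (g x) x
  have h5 := hgh x
  rw [dist_comm, dist_eq_norm] at h5
  have : m = 4 * ε := by simp only [ε]; ring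
  linarith

/-- Existence of a solution of VI(F, X) for `F` continuous on a compact convex body `X`. -/
theorem vi_has_solution {n : ℕ}
    (X : Set (EuclideanSpace ℝ (Fin n)))
    (hcomp : IsCompact X) (hconv : Convex ℝ X) (hint : (interior X).Nonempty)
    (F : EuclideanSpace ℝ (Fin n) → EuclideanSpace ℝ (Fin n))
    (hF : ContinuousOn F X) :
    ∃ xstar ∈ X, ∀ x ∈ X, ⟪F xstar, x - xstar⟫ ≥ 0 := by
  obtain ⟨P, hP1, hP2⟩ := proj_exists X hcomp hconv (hint.mono interior_subset)
  have hPc : Continuous P := (proj_lip X P hP1 hP2).continuous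
  obtain ⟨R, hR, hXR⟩ := hcomp.isBounded.exists_pos_norm_le
  let T : EE n → EE n := fun x => P (P x - F (P x))
  have hT : Continuous T := hPc.comp (hPc.sub (hF.comp_continuous hPc hP1))
  obtain ⟨y, hy⟩ := brouwer (fun x => R⁻¹ • T (R • x))
    (by fun_prop) (fun x => by
      rw [norm_smul, norm_inv, Real.norm_of_nonneg hR.le, inv_mul_le_iff₀ hR, mul_one]
      exact hXR _ (hP1 _))
  have hz : T (R • y) = R • y := by
    conv_rhs => rw [← hy]
    rw [smul_smul, mul_inv_cancel₀ hR.ne', one_smul]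
  set z := R • y
  have hzX : z ∈ X := by rw [← hz]; exact hP1 _
  have hPz : P z = z := proj_fix X P hP2 z hzX
  have hz2 : P (z - F z) = z := by
    have : T z = P (P z - F (P z)) := rfl
    rw [hPz] at this
    rw [← this, hz]
  refine ⟨z, hzX, fun x hx => ?_⟩
  have := hP2 (z - F z) x hx
  rw [hz2, sub_sub_cancel_left, inner_neg_left] at this
  linarith
end

section
/- Let X ⊆ ℝⁿ be a compact convex body (a compact convex set with nonempty interior) and let F : X → ℝⁿ be continuous and strictly pseudomonotone on X. Then the variational inequality VI(F, X) has exactly one solution. -/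
open scoped RealInnerProductSpace

theorem klee_aux {E ι : Type*} [DecidableEq ι] [NormedAddCommGroup E] [NormedSpace ℝ E]
    (C : ι → Set E) (hC : ∀ i, IsClosed (C i)) (hC' : ∀ i, Convex ℝ (C i)) (S : Finset ι) :
    ∀ K : Set E, IsCompact K → Convex ℝ K → K.Nonempty → (∀ x ∈ K, ∃ i ∈ S, x ∈ C i) →
      (∀ j ∈ S, ∃ x ∈ K, ∀ i ∈ S, i ≠ j → x ∈ C i) → ∃ x ∈ K, ∀ i ∈ S, x ∈ C i := by
  induction S using Finset.induction_on with
  | empty =>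
    intro K _ _ hne _ _
    obtain ⟨x, hx⟩ := hne
    exact ⟨x, hx, by simp⟩
  | insert a T ha ih =>
    intro K hK hKc hne hcov hj
    by_contra hcon
    push Not at hcon
    have hDeq : K ∩ (⋂ i ∈ T, C i) = {x | x ∈ K ∧ ∀ i ∈ T, x ∈ C i} := by
      ext x; simp
    have hDc : IsCompact (K ∩ (⋂ i ∈ T, C i)) :=
      hK.inter_right (isClosed_biInter fun i _ => hC i)
    have hDv : Convex ℝ (K ∩ (⋂ i ∈ T, C i)) :=
      hKc.inter (convex_iInter₂ fun i _ => hC' i)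
    have hdis : Disjoint (K ∩ (⋂ i ∈ T, C i)) (C a) := by
      rw [Set.disjoint_left, hDeq]
      rintro x ⟨hxK, hxT⟩ hxa
      obtain ⟨i, hi, hi'⟩ := hcon x hxK
      rcases Finset.mem_insert.1 hi with rfl | h
      · exact hi' hxa
      · exact hi' (hxT i h)
    obtain ⟨f, u, v, hfu, huv, hfv⟩ :=
      geometric_hahn_banach_compact_closed hDv hDc (hC' a) (hC a) hdis
    rw [hDeq] at hfu
    obtain ⟨p, hpK, hp⟩ := hj a (Finset.mem_insert_self _ _)
    have hpT : ∀ i ∈ T, p ∈ C i := fun i hi =>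
      hp i (Finset.mem_insert_of_mem hi) (fun h => ha (h ▸ hi))
    have hpu := hfu p ⟨hpK, hpT⟩
    have key : ∀ j ∈ T, ∃ x ∈ K ∩ {x | f x = u}, ∀ i ∈ T, i ≠ j → x ∈ C i := by
      intro j hjT
      obtain ⟨q, hqK, hq⟩ := hj j (Finset.mem_insert_of_mem hjT)
      have hqa : q ∈ C a := hq a (Finset.mem_insert_self _ _) (fun h => ha (h ▸ hjT))
      have hqv := hfv q hqa
      have hW : Convex ℝ (K ∩ ⋂ i ∈ T, ⋂ _ : i ≠ j, C i) :=
        hKc.inter (convex_iInter₂ fun i _ => convex_iInter fun _ => hC' i)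
      have hpW : p ∈ K ∩ ⋂ i ∈ T, ⋂ _ : i ≠ j, C i := by
        simp only [Set.mem_inter_iff, Set.mem_iInter]
        exact ⟨hpK, fun i hi _ => hpT i hi⟩
      have hqW : q ∈ K ∩ ⋂ i ∈ T, ⋂ _ : i ≠ j, C i := by
        simp only [Set.mem_inter_iff, Set.mem_iInter]
        exact ⟨hqK, fun i hi h => hq i (Finset.mem_insert_of_mem hi) h⟩
      obtain ⟨x, hx, hxu⟩ := hW.isPreconnected.intermediate_value hpW hqW
        f.continuous.continuousOn ⟨hpu.le, (huv.trans hqv).le⟩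
      simp only [Set.mem_inter_iff, Set.mem_iInter] at hx
      exact ⟨x, ⟨hx.1, hxu⟩, hx.2⟩
    have hne' : (K ∩ {x | f x = u}).Nonempty := by
      rcases T.eq_empty_or_nonempty with rfl | ⟨j, hjT⟩
      · obtain ⟨i, hi, hpi⟩ := hcov p hpK
        have : i = a := by simpa using hi
        subst this
        have := hfv p hpi
        linarith
      · obtain ⟨x, hx, _⟩ := key j hjT
        exact ⟨x, hx⟩
    obtain ⟨x, ⟨hxK, hxu⟩, hx⟩ := ih (K ∩ {x | f x = u})
      (hK.inter_right (isClosed_eq f.continuous continuous_const))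
      (hKc.inter (convex_hyperplane f.toLinearMap.isLinear u)) hne'
      (by
        rintro x ⟨hxK, hxu⟩
        obtain ⟨i, hi, hxi⟩ := hcov x hxK
        rcases Finset.mem_insert.1 hi with rfl | h
        · have := hfv x hxi
          have h2 : f x = u := hxu
          linarith
        · exact ⟨i, h, hxi⟩) key
    have := hfu x ⟨hxK, hx⟩
    have h2 : f x = u := hxu
    linarith

theorem kkm_aux {E : Type*} [DecidableEq E] [NormedAddCommGroup E] [NormedSpace ℝ E]
    (C : E → Set E) (hC : ∀ i, IsClosed (C i)) (hC' : ∀ i, Convex ℝ (C i)) (S : Finset E)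
    (hcov : ∀ T ⊆ S, ∀ x ∈ convexHull ℝ (T : Set E), ∃ i ∈ T, x ∈ C i) (hS : S.Nonempty) :
    ∃ x ∈ convexHull ℝ (S : Set E), ∀ i ∈ S, x ∈ C i := by
  induction S using Finset.strongInduction with
  | H S ih =>
    have hne : (convexHull ℝ (S : Set E)).Nonempty := by
      rw [convexHull_nonempty_iff]; exact_mod_cast hS
    refine klee_aux C hC hC' S _ (S.finite_toSet.isCompact_convexHull ℝ)
      (convex_convexHull ℝ _) hne (hcov S subset_rfl) ?_
    intro j hj
    rcases (S.erase j).eq_empty_or_nonempty with h | h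
    · obtain ⟨x, hx⟩ := hne
      refine ⟨x, hx, fun i hi hij => ?_⟩
      have : i ∈ S.erase j := Finset.mem_erase.2 ⟨hij, hi⟩
      simp [h] at this
    · obtain ⟨x, hx, hx'⟩ := ih (S.erase j) (Finset.erase_ssubset hj)
        (fun T hT => hcov T (hT.trans (Finset.erase_subset _ _))) h
      exact ⟨x, convexHull_mono (by exact_mod_cast Finset.erase_subset _ _) hx,
        fun i hi hij => hx' i (Finset.mem_erase.2 ⟨hij, hi⟩)⟩

/-- Uniqueness of the solution of VI(F, X) for `F` continuous and strictly pseudomonotone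
on a compact convex body `X`. -/
theorem vi_has_unique_solution {n : ℕ}
    (X : Set (EuclideanSpace ℝ (Fin n)))
    (hcomp : IsCompact X) (hconv : Convex ℝ X) (hint : (interior X).Nonempty)
    (F : EuclideanSpace ℝ (Fin n) → EuclideanSpace ℝ (Fin n))
    (hF : ContinuousOn F X)
    (hstrict : ∀ x ∈ X, ∀ y ∈ X, x ≠ y → ⟪F x, y - x⟫ ≥ 0 → ⟪F y, y - x⟫ > 0) :
    ∃! xstar, xstar ∈ X ∧ ∀ x ∈ X, ⟪F xstar, x - xstar⟫ ≥ 0 := by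
  classical
  let C : EuclideanSpace ℝ (Fin n) → Set (EuclideanSpace ℝ (Fin n)) :=
    fun y => {x | ⟪F y, x⟫ ≤ ⟪F y, y⟫}
  have hC : ∀ i, IsClosed (C i) := fun i => isClosed_le (by fun_prop) (by fun_prop)
  have hC' : ∀ i, Convex ℝ (C i) := fun i =>
    convex_halfSpace_le (innerSL ℝ (F i)).toLinearMap.isLinear _
  have hcov : ∀ T : Finset (EuclideanSpace ℝ (Fin n)), (T : Set _) ⊆ X →
      ∀ x ∈ convexHull ℝ (T : Set (EuclideanSpace ℝ (Fin n))), ∃ i ∈ T, x ∈ C i := by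
    intro T hT x hx
    by_contra hcon
    push Not at hcon
    have hxX : x ∈ X := convexHull_min hT hconv hx
    have hsub : (T : Set (EuclideanSpace ℝ (Fin n))) ⊆ {z | ⟪F x, z⟫ < ⟪F x, x⟫} := by
      intro y hy
      have h1 : ⟪F y, y⟫ < ⟪F y, x⟫ := not_le.1 (hcon y hy)
      by_contra h2
      have h2 : ⟪F x, x⟫ ≤ ⟪F x, y⟫ := not_lt.1 h2
      have hne : x ≠ y := by
        rintro rfl
        exact lt_irrefl _ h1
      have := hstrict x hxX y (hT hy) hne (by rw [inner_sub_right]; linarith)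
      rw [inner_sub_right] at this
      linarith
    have h3 := convexHull_min hsub
      (convex_halfSpace_lt (innerSL ℝ (F x)).toLinearMap.isLinear _) hx
    exact lt_irrefl _ (show ⟪F x, x⟫ < ⟪F x, x⟫ from h3)
  have hX0 : X.Nonempty := hint.mono interior_subset
  obtain ⟨s, hsX, hs⟩ : (X ∩ ⋂ y : X, C y).Nonempty := by
    refine hcomp.inter_iInter_nonempty (fun y : X => C y) (fun y => hC y) ?_
    intro u
    rcases u.eq_empty_or_nonempty with rfl | hu
    · simpa using hX0
    · have hsub : ((u.image Subtype.val : Finset _) : Set (EuclideanSpace ℝ (Fin n))) ⊆ X := by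
        intro z hz
        simp only [Finset.coe_image, Set.mem_image] at hz
        obtain ⟨w, _, rfl⟩ := hz
        exact w.2
      obtain ⟨x, hx, hx'⟩ := kkm_aux C hC hC' (u.image Subtype.val)
        (fun T hT => hcov T (fun z hz => hsub (hT hz))) (hu.image _)
      refine ⟨x, convexHull_min hsub hconv hx, ?_⟩
      simp only [Set.mem_iInter]
      exact fun i hi => hx' i (Finset.mem_image_of_mem _ hi)
  simp only [Set.mem_iInter, Subtype.forall] at hs
  have hsol : ∀ x ∈ X, ⟪F s, x - s⟫ ≥ 0 := by
    intro x hx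
    let g : ℝ → EuclideanSpace ℝ (Fin n) := fun t => s + t • (x - s)
    have hg : Continuous g := by fun_prop
    have hg0 : g 0 = s := by simp [g]
    have hgX : ∀ t ∈ Set.Icc (0:ℝ) 1, g t ∈ X := fun t ht =>
      hconv.add_smul_sub_mem hsX hx ht
    have hFg : ContinuousOn (fun t => ⟪F (g t), x - s⟫) (Set.Icc (0:ℝ) 1) :=
      (hF.comp hg.continuousOn hgX).inner continuousOn_const
    have h0 := (hFg 0 (by simp)).mono (Set.Ioc_subset_Icc_self (a := (0:ℝ)) (b := 1))
    have h1 : Filter.Tendsto (fun t => ⟪F (g t), x - s⟫) (nhdsWithin 0 (Set.Ioc (0:ℝ) 1))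
        (nhds ⟪F (g 0), x - s⟫) := h0
    rw [hg0] at h1
    have : (nhdsWithin (0:ℝ) (Set.Ioc (0:ℝ) 1)).NeBot := by
      rw [nhdsWithin_Ioc_eq_nhdsGT one_pos]; infer_instance
    refine ge_of_tendsto h1 ?_
    filter_upwards [self_mem_nhdsWithin] with t ht
    have h2 : ⟪F (g t), s⟫ ≤ ⟪F (g t), g t⟫ := hs (g t) (hgX t ⟨ht.1.le, ht.2⟩)
    have h3 : ⟪F (g t), g t⟫ = ⟪F (g t), s⟫ + t * ⟪F (g t), x - s⟫ := by
      conv_lhs => rw [show ⟪F (g t), g t⟫ = ⟪F (g t), s + t • (x - s)⟫ from rfl]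
      rw [inner_add_right, real_inner_smul_right]
    have h4 : 0 ≤ t * ⟪F (g t), x - s⟫ := by linarith
    exact nonneg_of_mul_nonneg_right h4 ht.1
  refine ⟨s, ⟨hsX, hsol⟩, ?_⟩
  rintro y ⟨hyX, hy⟩
  by_contra hne
  have h1 := hstrict y hyX s hsX hne (hy s hsX)
  have h2 := hsol y hyX
  rw [inner_sub_right] at h1 h2
  linarith
end

section
/- Let X ⊆ ℝⁿ be a nonempty compact set, let F : X → ℝⁿ be continuous, let {C_j} be a sequence of nonempty compact subsets of X with C_j ⊆ C_{j+1} for all j and the closure of ⋃_{j=1}^∞ C_j equal to X, and let x_j ∈ C_j satisfy max_{y ∈ C_j} F(x_j)ᵀ(x_j − y) < 1/2^j for each j. Then there exist a subsequence of {x_j} converging to a point x* ∈ X, and every such limit point x* is a solution of the variational inequality VI(F, X). -/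
open scoped RealInnerProductSpace

/-- Iterates with vanishing gaps over an exhausting family of compact subsets have a
convergent subsequence, and every subsequential limit solves VI(F, X). -/
theorem subsequence_limit_is_solution {n : ℕ}
    (X : Set (EuclideanSpace ℝ (Fin n))) (hne : X.Nonempty) (hcomp : IsCompact X)
    (F : EuclideanSpace ℝ (Fin n) → EuclideanSpace ℝ (Fin n))
    (hF : ContinuousOn F X)
    (C : ℕ → Set (EuclideanSpace ℝ (Fin n)))
    (hCne : ∀ j, (C j).Nonempty) (hCcomp : ∀ j, IsCompact (C j))
    (hCX : ∀ j, C j ⊆ X) (hmono : ∀ j, C j ⊆ C (j + 1))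
    (hclos : closure (⋃ j, C j) = X)
    (x : ℕ → EuclideanSpace ℝ (Fin n)) (hx : ∀ j, x j ∈ C j)
    (hgap : ∀ j, sSup ((fun y => ⟪F (x j), x j - y⟫) '' C j) < 1 / 2 ^ j) :
    (∃ (φ : ℕ → ℕ), StrictMono φ ∧ ∃ xstar ∈ X,
        Filter.Tendsto (x ∘ φ) Filter.atTop (nhds xstar)) ∧
      ∀ (φ : ℕ → ℕ) (xstar : EuclideanSpace ℝ (Fin n)), StrictMono φ → xstar ∈ X →
        Filter.Tendsto (x ∘ φ) Filter.atTop (nhds xstar) →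
        ∀ y ∈ X, ⟪F xstar, y - xstar⟫ ≥ 0 := by
  refine ⟨?_, ?_⟩
  · obtain ⟨a, ha, φ, hφ, hl⟩ := hcomp.tendsto_subseq (fun j => hCX j (hx j))
    exact ⟨φ, hφ, a, ha, hl⟩
  · intro φ a hφ ha hl y hy
    have hm : Monotone C := monotone_nat_of_le_succ hmono
    have hFl : Filter.Tendsto (fun k => F (x (φ k))) Filter.atTop (nhds (F a)) := by
      have h1 : Filter.Tendsto (x ∘ φ) Filter.atTop (nhdsWithin a X) :=
        tendsto_nhdsWithin_iff.2 ⟨hl, Filter.Eventually.of_forall fun k => hCX _ (hx _)⟩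
      exact (hF a ha).tendsto.comp h1
    have hpow : Filter.Tendsto (fun k => (1 : ℝ) / 2 ^ (φ k)) Filter.atTop (nhds 0) := by
      have h2 : Filter.Tendsto (fun k : ℕ => (1 / 2 : ℝ) ^ k) Filter.atTop (nhds 0) :=
        tendsto_pow_atTop_nhds_zero_of_lt_one (by norm_num) (by norm_num)
      have h3 := h2.comp hφ.tendsto_atTop
      refine h3.congr fun k => ?_
      simp
    have key : ∀ z ∈ ⋃ j, C j, 0 ≤ ⟪F a, z - a⟫ := by
      intro z hz
      obtain ⟨j, hj⟩ := Set.mem_iUnion.1 hz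
      have hle : ⟪F a, a - z⟫ ≤ 0 := by
        refine le_of_tendsto_of_tendsto (hFl.inner (hl.sub_const z)) hpow ?_
        filter_upwards [Filter.eventually_ge_atTop j] with k hk
        refine le_trans (le_csSup ?_ ?_) (hgap (φ k)).le
        · exact ((hCcomp (φ k)).image (by fun_prop)).bddAbove
        · exact ⟨z, hm (hk.trans (hφ.id_le k)) hj, rfl⟩
      rw [← neg_sub, inner_neg_right]
      linarith
    have hcl : IsClosed {z : EuclideanSpace ℝ (Fin n) | 0 ≤ ⟪F a, z - a⟫} :=
      isClosed_le continuous_const (by fun_prop)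
    rw [← hclos] at hy
    exact closure_minimal key hcl hy
end

section
/- Let X ⊆ ℝⁿ be a nonempty closed convex set (possibly unbounded), let F : X → ℝⁿ be continuous and strongly monotone on X with constant M > 0, and let x* ∈ X be the solution of the variational inequality VI(F, X). Let {C_j} be a sequence of nonempty compact subsets of X with C_j ⊆ C_{j+1} for all j, such that x* ∈ C_j for all j ≥ k for some k, and let x_j ∈ C_j satisfy max_{y ∈ C_j} F(x_j)ᵀ(x_j − y) < 1/2^j for each j. Then M‖x_j − x*‖² < 1/2^j for all j > k, and hence the sequence {x_j} converges to x*. -/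
open scoped RealInnerProductSpace

/-- For a strongly monotone `F` on a closed convex set `X`, iterates `x_j ∈ C_j`
with gap over `C_j` less than `1/2^j` satisfy `M‖x_j − x*‖² < 1/2^j` once `x* ∈ C_j`,
and hence converge to the solution `x*`. -/
theorem iterates_converge_to_solution {n : ℕ}
    (X : Set (EuclideanSpace ℝ (Fin n))) (hne : X.Nonempty)
    (hclosed : IsClosed X) (hconv : Convex ℝ X)
    (F : EuclideanSpace ℝ (Fin n) → EuclideanSpace ℝ (Fin n))
    (hF : ContinuousOn F X)
    (M : ℝ) (hM : M > 0)
    (hstrong : ∀ x ∈ X, ∀ y ∈ X, ⟪F y - F x, y - x⟫ ≥ M * ‖y - x‖ ^ 2)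
    (xstar : EuclideanSpace ℝ (Fin n)) (hxstar : xstar ∈ X)
    (hsol : ∀ x ∈ X, ⟪F xstar, x - xstar⟫ ≥ 0)
    (C : ℕ → Set (EuclideanSpace ℝ (Fin n)))
    (hCne : ∀ j, (C j).Nonempty) (hCcomp : ∀ j, IsCompact (C j))
    (hCX : ∀ j, C j ⊆ X) (hmono : ∀ j, C j ⊆ C (j + 1))
    (k : ℕ) (hk : ∀ j ≥ k, xstar ∈ C j)
    (x : ℕ → EuclideanSpace ℝ (Fin n)) (hx : ∀ j, x j ∈ C j)
    (hgap : ∀ j, sSup ((fun y => ⟪F (x j), x j - y⟫) '' C j) < 1 / 2 ^ j) :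
    (∀ j > k, M * ‖x j - xstar‖ ^ 2 < 1 / 2 ^ j) ∧
      Filter.Tendsto x Filter.atTop (nhds xstar) := by
  have main : ∀ j > k, M * ‖x j - xstar‖ ^ 2 < 1 / 2 ^ j := by
    intro j hj
    have hbdd : BddAbove ((fun y => ⟪F (x j), x j - y⟫) '' C j) :=
      (hCcomp j).bddAbove_image (by fun_prop)
    have h1 : ⟪F (x j), x j - xstar⟫ ≤ sSup ((fun y => ⟪F (x j), x j - y⟫) '' C j) :=
      le_csSup hbdd ⟨xstar, hk j (le_of_lt hj), rfl⟩
    have h2 := hstrong xstar hxstar (x j) (hCX j (hx j))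
    have h3 := hsol (x j) (hCX j (hx j))
    have h4 := hgap j
    rw [inner_sub_left] at h2
    linarith
  refine ⟨main, ?_⟩
  rw [tendsto_iff_norm_sub_tendsto_zero]
  have hlim : Filter.Tendsto (fun j : ℕ => √((1 / 2 : ℝ) ^ j / M)) Filter.atTop (nhds 0) := by
    have h := (tendsto_pow_atTop_nhds_zero_of_lt_one (r := (1 / 2 : ℝ))
      (by norm_num) (by norm_num)).div_const M
    simpa using h.sqrt
  refine squeeze_zero' (Filter.Eventually.of_forall fun j => norm_nonneg _) ?_ hlim
  filter_upwards [Filter.eventually_gt_atTop k] with j hj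
  apply Real.le_sqrt_of_sq_le
  rw [le_div_iff₀ hM, one_div_pow]
  linarith [main j hj]
end
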